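/- arXiv:1602.08778 — 2 statements merged into one kernel-verified Lean document; each statement's English description precedes it below -/
import Mathlib

section
/- Let C = H ← B⃗0,!,B⃗1 be a clause, A a ground atom, S ⊆ HB a specification, and (pre, post) a c-s-specification. Say that condition (3) of c-coveredness holds for a substitution ρ with Hρ ∈ pre if for every ground instance B⃗0ρη with B⃗0ρη ⊆ post ∪ {!} and dom(η) = vars(B⃗0ρ), A is covered by (H ← B⃗1)ρη w.r.t. S. If condition (3) holds for an atom Hρ ∈ pre, where dom(ρ) ⊆ vars(H), rng(ρ) ∩ vars(C) ⊆ vars(H), and dom(ρ) ∩ rng(ρ) = ∅, then it holds for every instance Hρ′ of Hρ such that A is an instance of Hρ′ and ρ′ satisfies the same three requirements (dom(ρ′) ⊆ vars(H), rng(ρ′) ∩ vars(C) ⊆ vars(H), dom(ρ′) ∩ rng(ρ′) = ∅). -/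
/-!
Condition (3) passes from `ρ` to `ρ'` because ground instances of `B0ρ'` are ground instances of
`B0ρ`, and covering substitutions can be transported back.

Write `Hρ' = Hρσ` and `A = Hρ'δ`. The hypotheses on domain and range say that `ρ` and `ρ'` fix the
variables of the clause outside `H` (the local variables), and that no such variable occurs in `Hρ`
or `Hρ'`. Given `η'` for `ρ'`, let `η` act on `vars (B0ρ)` as `η'` on local variables and as `ση'`
elsewhere; then `B0ρη = B0ρ'η'`, so condition (3) for `ρ` yields `θ` with `Hρηθ = A` and
`B1ρηθ ⊆ S ∪ {!}`.

Let `θ'` be `θ` on local variables and `δ` elsewhere. Then `ρ'η'θ'` and `ρηθ` agree on the clause.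
The point to check is that `η'` and `δ` agree on variables common to `Hρ'` and `B0ρ'`: such a
variable occurs in `yσ` for some variable `y` common to `Hρ` and `B0ρ`, and there
`yση' = yη = yηθ = yσδ`, the second equality because `yη` is ground and the third because
`Hρηθ = A = Hρσδ`.
-/

/- Formalization of definite clause programs with the cut (Prolog),
   LD-resolution, LD-trees, pruning by the cut, specifications,
   correctness and completeness notions. -/

namespace LP

/-- First-order terms over function symbols `F`; variables are indexed by `ℕ`. -/
inductive Tm (F : Type) : Type
  | var : ℕ → Tm F
  | fn  : F → List (Tm F) → Tm F

/-- Ordinary (non-cut) atoms over function symbols `F` and predicate symbols `Pr`. -/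
structure Atom (F Pr : Type) : Type where
  pred : Pr
  args : List (Tm F)

/-- Extended atoms: ordinary atoms together with the cut `!`. -/
inductive EAtom (F Pr : Type) : Type
  | cut : EAtom F Pr
  | atm : Atom F Pr → EAtom F Pr

/-- A query is a finite sequence of extended atoms. -/
abbrev Query (F Pr : Type) := List (EAtom F Pr)

/-- A definite clause (whose body may contain cuts). -/
structure Clause (F Pr : Type) : Type where
  head : Atom F Pr
  body : Query F Pr

/-- A program (with cuts) is a finite sequence of clauses. -/
abbrev Prog (F Pr : Type) := List (Clause F Pr)

/-- Substitutions. -/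
abbrev Subst (F : Type) := ℕ → Tm F

variable {F Pr : Type}

/-- The empty (identity) substitution. -/
def Subst.idS : Subst F := fun n => Tm.var n

/-- Applying a substitution to a term. -/
def Tm.subst (θ : Subst F) : Tm F → Tm F
  | .var n => θ n
  | .fn f ts => .fn f (ts.attach.map (fun t => Tm.subst θ t.1))
decreasing_by
  have := List.sizeOf_lt_of_mem t.2
  simp only [Tm.fn.sizeOf_spec]
  omega

/-- The list of variables of a term. -/
def Tm.varsL : Tm F → List ℕ
  | .var n => [n]
  | .fn _ ts => ts.attach.flatMap (fun t => Tm.varsL t.1)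
decreasing_by
  have := List.sizeOf_lt_of_mem t.2
  simp only [Tm.fn.sizeOf_spec]
  omega

/-- The set of variables of a term. -/
def Tm.vars (t : Tm F) : Set ℕ := {n | n ∈ t.varsL}

/-- A term is ground if it has no variables. -/
def Tm.Ground (t : Tm F) : Prop := t.vars = ∅

def Atom.subst (θ : Subst F) (A : Atom F Pr) : Atom F Pr :=
  ⟨A.pred, A.args.map (Tm.subst θ)⟩

def Atom.vars (A : Atom F Pr) : Set ℕ := {n | ∃ t ∈ A.args, n ∈ t.vars}

/-- A ground atom (an element of the Herbrand base `HB` when it moreover holds). -/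
def Atom.Ground (A : Atom F Pr) : Prop := A.vars = ∅

def EAtom.subst (θ : Subst F) : EAtom F Pr → EAtom F Pr
  | .cut => .cut
  | .atm A => .atm (Atom.subst θ A)

def EAtom.vars : EAtom F Pr → Set ℕ
  | .cut => ∅
  | .atm A => A.vars

def EAtom.Ground (a : EAtom F Pr) : Prop := a.vars = ∅

def Query.subst (θ : Subst F) (Q : Query F Pr) : Query F Pr := Q.map (EAtom.subst θ)

def Query.vars (Q : Query F Pr) : Set ℕ := {n | ∃ a ∈ Q, n ∈ EAtom.vars a}

def Query.Ground (Q : Query F Pr) : Prop := Query.vars Q = ∅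

def Clause.subst (θ : Subst F) (C : Clause F Pr) : Clause F Pr :=
  ⟨Atom.subst θ C.head, Query.subst θ C.body⟩

def Clause.vars (C : Clause F Pr) : Set ℕ := C.head.vars ∪ Query.vars C.body

def Clause.Ground (C : Clause F Pr) : Prop := C.vars = ∅

/-- The domain of a substitution. -/
def Subst.dom (θ : Subst F) : Set ℕ := {n | θ n ≠ .var n}

/-- The range variables of a substitution. -/
def Subst.rng (θ : Subst F) : Set ℕ := {m | ∃ n, θ n ≠ .var n ∧ m ∈ (θ n).vars}

/-- All variables of a substitution. -/
def Subst.varSet (θ : Subst F) : Set ℕ := θ.dom ∪ θ.rng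

/-- Composition: apply `θ` first, then `σ`. -/
def Subst.comp (θ σ : Subst F) : Subst F := fun n => (θ n).subst σ

/-- A substitution is idempotent when its domain and range are disjoint. -/
def Subst.Idempotent (θ : Subst F) : Prop := Disjoint θ.dom θ.rng

/-- A substitution is ground if it maps every domain variable to a ground term. -/
def Subst.GroundOn (θ : Subst F) : Prop := ∀ n ∈ θ.dom, (θ n).Ground

/-- `compN θ i k` is the composition `θ i ; θ (i+1) ; ⋯ ; θ (i+k-1)`. -/
def compN (θ : ℕ → Subst F) : ℕ → ℕ → Subst F
  | _, 0 => Subst.idS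
  | i, k+1 => Subst.comp (θ i) (compN θ (i+1) k)

/-- `θ` unifies atoms `A` and `B`. -/
def Unifies (θ : Subst F) (A B : Atom F Pr) : Prop := Atom.subst θ A = Atom.subst θ B

/-- `θ` is a most general unifier of `A` and `B`. -/
def IsMgu (θ : Subst F) (A B : Atom F Pr) : Prop :=
  Unifies θ A B ∧ ∀ σ : Subst F, Unifies σ A B → ∃ δ : Subst F, ∀ n, σ n = (θ n).subst δ

/-- A unifier is relevant if all its variables occur in the unified atoms. -/
def Relevant (θ : Subst F) (A B : Atom F Pr) : Prop := θ.varSet ⊆ A.vars ∪ B.vars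

/-- `B` is an instance of `A`. -/
def Atom.Inst (B A : Atom F Pr) : Prop := ∃ θ : Subst F, B = Atom.subst θ A

/-- `Q'` is an instance of `Q`. -/
def Query.Inst (Q' Q : Query F Pr) : Prop := ∃ θ : Subst F, Q' = Query.subst θ Q

/-- `C'` is an instance of `C`. -/
def Clause.Inst (C' C : Clause F Pr) : Prop := ∃ θ : Subst F, C' = Clause.subst θ C

/-- `C` and `C'` are variants of each other. -/
def Variant (C C' : Clause F Pr) : Prop := Clause.Inst C C' ∧ Clause.Inst C' C

/-! ### Specifications -/

/-- Membership of an extended atom in `S ∪ {!}`. -/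
def EAtomIn (S : Set (Atom F Pr)) : EAtom F Pr → Prop
  | .cut => True
  | .atm A => A ∈ S

/-- `S ⊨ Q`: every atom of `Q` is in `S ∪ {!}`. -/
def SpecModels (S : Set (Atom F Pr)) (Q : Query F Pr) : Prop := ∀ a ∈ Q, EAtomIn S a

/-- A set of atoms is closed under substitution. -/
def SubstClosed (S : Set (Atom F Pr)) : Prop := ∀ A ∈ S, ∀ θ : Subst F, Atom.subst θ A ∈ S

/-- The restriction of a set of atoms to ground atoms (to `HB`). -/
def HBRestrict (S : Set (Atom F Pr)) : Set (Atom F Pr) := {A ∈ S | A.Ground}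

/-- A ground atom `A` is covered by clause `C` w.r.t. `S`:
`A` is the head of a ground instance of `C` whose body atoms are in `S ∪ {!}`. -/
def CoveredBy (S : Set (Atom F Pr)) (C : Clause F Pr) (A : Atom F Pr) : Prop :=
  ∃ θ : Subst F, Clause.Ground (Clause.subst θ C) ∧ Atom.subst θ C.head = A ∧
    SpecModels S (Query.subst θ C.body)

/-- The least Herbrand model of `P` (the cut is treated as true). -/
inductive MP (P : Prog F Pr) : Atom F Pr → Prop where
  | step : ∀ C ∈ P, ∀ θ : Subst F, Clause.Ground (Clause.subst θ C) →
      (∀ A : Atom F Pr, EAtom.atm A ∈ Query.subst θ C.body → MP P A) →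
      MP P (Atom.subst θ C.head)

/-! ### General interpretations and logical consequence -/

structure Interp (F Pr : Type) : Type 1 where
  carrier : Type
  fnI : F → List carrier → carrier
  predI : Pr → List carrier → Prop

def Interp.evalTm (I : Interp F Pr) (v : ℕ → I.carrier) : Tm F → I.carrier
  | .var n => v n
  | .fn f ts => I.fnI f (ts.attach.map (fun t => I.evalTm v t.1))
decreasing_by
  have := List.sizeOf_lt_of_mem t.2
  simp only [Tm.fn.sizeOf_spec]
  omega

def Interp.holdsA (I : Interp F Pr) (v : ℕ → I.carrier) (A : Atom F Pr) : Prop :=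
  I.predI A.pred (A.args.map (I.evalTm v))

/-- The cut is true in every interpretation. -/
def Interp.holdsE (I : Interp F Pr) (v : ℕ → I.carrier) : EAtom F Pr → Prop
  | .cut => True
  | .atm A => I.holdsA v A

def Interp.holdsQ (I : Interp F Pr) (v : ℕ → I.carrier) (Q : Query F Pr) : Prop :=
  ∀ a ∈ Q, I.holdsE v a

def Interp.ModelsClause (I : Interp F Pr) (C : Clause F Pr) : Prop :=
  ∀ v : ℕ → I.carrier, I.holdsQ v C.body → I.holdsA v C.head

def Interp.ModelsProg (I : Interp F Pr) (P : Prog F Pr) : Prop :=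
  ∀ C ∈ P, I.ModelsClause C

/-- `P ⊨ Q` (truth of a formula is truth of its universal closure). -/
def Entails (P : Prog F Pr) (Q : Query F Pr) : Prop :=
  ∀ I : Interp F Pr, I.ModelsProg P → ∀ v : ℕ → I.carrier, I.holdsQ v Q

/-- `M` (a set of ground atoms) is a Herbrand model of `P`. -/
def HerbModels (M : Set (Atom F Pr)) (P : Prog F Pr) : Prop :=
  ∀ C ∈ P, ∀ θ : Subst F, Clause.Ground (Clause.subst θ C) →
    (∀ A : Atom F Pr, EAtom.atm A ∈ Query.subst θ C.body → A ∈ M) →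
    Atom.subst θ C.head ∈ M

/-- Removing all occurrences of the cut from a query. -/
def rmCutQ (Q : Query F Pr) : Query F Pr :=
  Q.filterMap (fun a => match a with | .cut => none | .atm A => some (.atm A))

/-- Removing all occurrences of the cut from a program. -/
def rmCutProg (P : Prog F Pr) : Prog F Pr := P.map (fun C => ⟨C.head, rmCutQ C.body⟩)

/-! ### LD-derivations -/

/-- Variables occurring in the queries `Q 0 … Q i`, the mgu's `sub 0 … sub (i-1)`
and the clause variants `cls 0 … cls (i-1)` of a derivation. -/
def histVars (Q : ℕ → Query F Pr) (sub : ℕ → Subst F)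
    (cls : ℕ → Option (Clause F Pr)) (i : ℕ) : Set ℕ :=
  {n | (∃ j ≤ i, n ∈ Query.vars (Q j)) ∨ (∃ j < i, n ∈ (sub j).varSet) ∨
       (∃ j < i, ∃ C : Clause F Pr, cls j = some C ∧ n ∈ C.vars)}

/-- One LD-resolution step (names the clause variant used, if any):
either a leading cut is deleted, or the first atom is resolved
with a clause via an idempotent relevant mgu. -/
def DStep (Q Q' : Query F Pr) (θ : Subst F) (oc : Option (Clause F Pr)) : Prop :=
  (∃ rest : Query F Pr, Q = .cut :: rest ∧ Q' = rest ∧ θ = Subst.idS ∧ oc = none) ∨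
  (∃ (A : Atom F Pr) (rest : Query F Pr) (C : Clause F Pr),
      Q = .atm A :: rest ∧ oc = some C ∧
      IsMgu θ A C.head ∧ θ.Idempotent ∧ Relevant θ A C.head ∧
      Q' = Query.subst θ (C.body ++ rest))

/-- A finite LD-derivation: queries `Q 0, …, Q len`,
mgu's `sub 0, …, sub (len-1)` and clause variants `cls 0, …, cls (len-1)`,
with clause variants standardized apart. -/
structure Deriv (F Pr : Type) : Type where
  len : ℕ
  Q : ℕ → Query F Pr
  sub : ℕ → Subst F
  cls : ℕ → Option (Clause F Pr)
  step : ∀ i < len, DStep (Q i) (Q (i+1)) (sub i) (cls i)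
  fresh : ∀ i < len, ∀ C : Clause F Pr, cls i = some C →
    Disjoint C.vars (histVars Q sub cls i)

/-- The derivation only uses (variants of) clauses of the program `P`. -/
def Deriv.FromProg (P : Prog F Pr) (D : Deriv F Pr) : Prop :=
  ∀ i < D.len, ∀ C : Clause F Pr, D.cls i = some C → ∃ C0 ∈ P, Variant C C0

def Deriv.Successful (D : Deriv F Pr) : Prop := D.Q D.len = []

/-- The computed answer `Q0 θ1 ⋯ θn` of a derivation. -/
def Deriv.answer (D : Deriv F Pr) : Query F Pr := Query.subst (compN D.sub 0 D.len) (D.Q 0)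

/-- At position `j` the query has a (protected) suffix of length `L`; the prefix
before it succeeds exactly at position `m` (the subderivation for the prefix ends there). -/
def Deriv.SuffixEndsAt (D : Deriv F Pr) (j L m : ℕ) : Prop :=
  j ≤ m ∧ m ≤ D.len ∧ (∀ i, j ≤ i → i < m → L < (D.Q i).length) ∧ (D.Q m).length = L

/-- An infinite LD-derivation. -/
structure InfLD (F Pr : Type) (P : Prog F Pr) : Type where
  Q : ℕ → Query F Pr
  sub : ℕ → Subst F
  cls : ℕ → Option (Clause F Pr)
  step : ∀ i : ℕ, DStep (Q i) (Q (i+1)) (sub i) (cls i)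
  fresh : ∀ i : ℕ, ∀ C : Clause F Pr, cls i = some C →
    Disjoint C.vars (histVars Q sub cls i)
  prog : ∀ i : ℕ, ∀ C : Clause F Pr, cls i = some C → ∃ C0 ∈ P, Variant C C0

/-- One SLD-resolution step, with an arbitrarily selected atom. -/
def SStep (Q Q' : Query F Pr) (θ : Subst F) (oc : Option (Clause F Pr)) : Prop :=
  (∃ l r : Query F Pr, Q = l ++ .cut :: r ∧ Q' = l ++ r ∧ θ = Subst.idS ∧ oc = none) ∨
  (∃ (l r : Query F Pr) (A : Atom F Pr) (C : Clause F Pr),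
      Q = l ++ .atm A :: r ∧ oc = some C ∧
      IsMgu θ A C.head ∧ θ.Idempotent ∧ Relevant θ A C.head ∧
      Q' = Query.subst θ (l ++ C.body ++ r))

/-- An infinite SLD-derivation (under an arbitrary selection rule). -/
structure InfSLD (F Pr : Type) (P : Prog F Pr) : Type where
  Q : ℕ → Query F Pr
  sub : ℕ → Subst F
  cls : ℕ → Option (Clause F Pr)
  step : ∀ i : ℕ, SStep (Q i) (Q (i+1)) (sub i) (cls i)
  fresh : ∀ i : ℕ, ∀ C : Clause F Pr, cls i = some C →
    Disjoint C.vars (histVars Q sub cls i)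
  prog : ∀ i : ℕ, ∀ C : Clause F Pr, cls i = some C → ∃ C0 ∈ P, Variant C C0

/-! ### Unrestricted LD-derivations and lifts -/

/-- One step of an unrestricted LD-derivation for program `P`. -/
def UStep (P : Prog F Pr) (Q Q' : Query F Pr) (θ : Subst F)
    (oc : Option (Clause F Pr)) : Prop :=
  (∃ rest : Query F Pr, Q = .cut :: rest ∧ Q' = rest ∧ θ = Subst.idS ∧ oc = none) ∨
  (∃ (A : Atom F Pr) (rest B : Query F Pr) (C : Clause F Pr),
      Q = .atm A :: rest ∧ oc = some C ∧ C ∈ P ∧ Subst.dom θ ⊆ Query.vars Q ∧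
      Clause.Inst ⟨Atom.subst θ A, B⟩ C ∧ Q' = B ++ Query.subst θ rest)

/-- A finite unrestricted LD-derivation for `P`. -/
structure UDeriv (F Pr : Type) (P : Prog F Pr) : Type where
  len : ℕ
  Q : ℕ → Query F Pr
  sub : ℕ → Subst F
  cls : ℕ → Option (Clause F Pr)
  step : ∀ i < len, UStep P (Q i) (Q (i+1)) (sub i) (cls i)

def UDeriv.Successful {P : Prog F Pr} (E : UDeriv F Pr P) : Prop := E.Q E.len = []

def UDeriv.answer {P : Prog F Pr} (E : UDeriv F Pr P) : Query F Pr :=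
  Query.subst (compN E.sub 0 E.len) (E.Q 0)

/-- The LD-derivation `D` is a lift of the unrestricted LD-derivation `E`. -/
def IsLift {P : Prog F Pr} (D : Deriv F Pr) (E : UDeriv F Pr P) : Prop :=
  Query.Inst (E.Q 0) (D.Q 0) ∧ D.len = E.len ∧
  (∀ i < D.len, (E.cls i = none ↔ D.cls i = none) ∧
    ∀ C C' : Clause F Pr, E.cls i = some C → D.cls i = some C' → Variant C' C)

/-! ### c-s-specifications (call-success specifications) -/

/-- `P` is c-s-correct w.r.t. `(pre, post)`: in every LD-derivation beginning with an
atomic query from `pre`, each selected atom is in `pre ∪ {!}` and each atomic computed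
answer of a successful subderivation is in `post ∪ {!}`. -/
def CsCorrect (P : Prog F Pr) (pre post : Set (Atom F Pr)) : Prop :=
  ∀ D : Deriv F Pr, D.FromProg P → (∃ A ∈ pre, D.Q 0 = [.atm A]) →
    (∀ i ≤ D.len, ∀ (a : EAtom F Pr) (rest : Query F Pr), D.Q i = a :: rest →
        a = .cut ∨ ∃ A ∈ pre, a = .atm A) ∧
    (∀ j m : ℕ, ∀ (A : Atom F Pr) (rest : Query F Pr), D.Q j = .atm A :: rest →
        D.SuffixEndsAt j rest.length m →
        Atom.subst (compN D.sub j (m - j)) A ∈ post)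

/-- The `i`-th element of `Q` (if any) is in `S ∪ {!}`. -/
def QIn (S : Set (Atom F Pr)) (Q : Query F Pr) (i : ℕ) : Prop :=
  ∀ a : EAtom F Pr, Q[i]? = some a → EAtomIn S a

/-- A clause is well-asserted w.r.t. a c-s-specification `(pre, post)`. -/
def WellAssertedClause (pre post : Set (Atom F Pr)) (C : Clause F Pr) : Prop :=
  ∀ θ : Subst F, Atom.subst θ C.head ∈ pre →
    (∀ k < C.body.length,
      (∀ i < k, QIn post (Query.subst θ C.body) i) → QIn pre (Query.subst θ C.body) k) ∧
    ((∀ i < C.body.length, QIn post (Query.subst θ C.body) i) → Atom.subst θ C.head ∈ post)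

/-- A query is well-asserted w.r.t. `(pre, post)`. -/
def WellAssertedQuery (pre post : Set (Atom F Pr)) (Q : Query F Pr) : Prop :=
  ∀ θ : Subst F, ∀ k < Q.length,
    (∀ i < k, QIn post (Query.subst θ Q) i) → QIn pre (Query.subst θ Q) k

/-! ### c-coveredness -/

/-- Ground atom `A` is c-covered w.r.t. `S` and `(pre, post)` by the clause `C`,
which is (a variant of) the `i`-th clause of `P`. -/
def CCoveredBy (P : Prog F Pr) (S pre post : Set (Atom F Pr)) (A : Atom F Pr)
    (C : Clause F Pr) (i : ℕ) : Prop :=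
  (∃ C0 : Clause F Pr, P[i]? = some C0 ∧ Variant C C0) ∧
  CoveredBy S C A ∧
  (∀ j < i, ∀ (H' : Atom F Pr) (A0 A1 : Query F Pr),
      P[j]? = some ⟨H', A0 ++ .cut :: A1⟩ → EAtom.cut ∉ A0 → H'.pred = C.head.pred →
      ∀ H'' ∈ pre, Atom.Inst A H'' →
        ∀ θ : Subst F, Atom.Ground (Atom.subst θ H'') →
          ¬ CoveredBy (HBRestrict post) ⟨H', A0⟩ (Atom.subst θ H'')) ∧
  (∀ B0 B1 : Query F Pr, C.body = B0 ++ .cut :: B1 →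
    ∀ ρ : Subst F, Subst.dom ρ ⊆ C.head.vars → (Subst.rng ρ ∩ C.vars) ⊆ C.head.vars →
      Disjoint (Subst.dom ρ) (Subst.rng ρ) →
      Atom.subst ρ C.head ∈ pre → Atom.Inst A (Atom.subst ρ C.head) →
      ∀ η : Subst F, Subst.dom η = Query.vars (Query.subst ρ B0) →
        Query.Ground (Query.subst η (Query.subst ρ B0)) →
        SpecModels post (Query.subst η (Query.subst ρ B0)) →
        CoveredBy S ⟨Atom.subst η (Atom.subst ρ C.head),
                     Query.subst η (Query.subst ρ B1)⟩ A)

/-- `A` is c-covered by some clause of `P`. -/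
def CCoveredByProg (P : Prog F Pr) (S pre post : Set (Atom F Pr)) (A : Atom F Pr) : Prop :=
  ∃ (i : ℕ) (C : Clause F Pr), P[i]? = some C ∧ CCoveredBy P S pre post A C i

/-! ### Level mappings, recurrence, acceptability -/

/-- Extension of a level mapping to extended atoms, with `|!| = 0`. -/
def eLvl (lvl : Atom F Pr → ℕ) : EAtom F Pr → ℕ
  | .cut => 0
  | .atm A => lvl A

/-- `P` is recurrent w.r.t. the level mapping `lvl`. -/
def Recurrent (P : Prog F Pr) (lvl : Atom F Pr → ℕ) : Prop :=
  ∀ C ∈ P, ∀ θ : Subst F, Clause.Ground (Clause.subst θ C) →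
    ∀ a ∈ Query.subst θ C.body, eLvl lvl a < lvl (Atom.subst θ C.head)

/-- `P` is acceptable w.r.t. the specification `S` and the level mapping `lvl`. -/
def Acceptable (P : Prog F Pr) (S : Set (Atom F Pr)) (lvl : Atom F Pr → ℕ) : Prop :=
  (∀ A : Atom F Pr, MP P A → A ∈ S) ∧
  (∀ C ∈ P, ∀ θ : Subst F, Clause.Ground (Clause.subst θ C) →
    ∀ i < C.body.length, (∀ j < i, QIn S (Query.subst θ C.body) j) →
      ∀ a : EAtom F Pr, (Query.subst θ C.body)[i]? = some a →
        eLvl lvl a < lvl (Atom.subst θ C.head))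

/-- A query is bounded w.r.t. a level mapping. -/
def BoundedQuery (lvl : Atom F Pr → ℕ) (Q : Query F Pr) : Prop :=
  ∃ k : ℕ, ∀ a ∈ Q, ∀ θ : Subst F, EAtom.Ground (EAtom.subst θ a) →
    eLvl lvl (EAtom.subst θ a) < k

/-! ### Completeness notions -/

/-- `P` is complete for the query `Q` w.r.t. `S`. -/
def CompleteFor (P : Prog F Pr) (S : Set (Atom F Pr)) (Q : Query F Pr) : Prop :=
  ∀ θ : Subst F, Query.Ground (Query.subst θ Q) → SpecModels S (Query.subst θ Q) →
    ∀ A : Atom F Pr, EAtom.atm A ∈ Query.subst θ Q → MP P A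

end LP

namespace LP

variable {F Pr : Type}

/-! ### LD-trees and SLD-trees -/

/-- A clause is applicable to an atom if (a variant of) its head unifies with it. -/
def Applicable (A : Atom F Pr) (C0 : Clause F Pr) : Prop :=
  ∃ (C : Clause F Pr) (θ : Subst F), Variant C C0 ∧ Atom.subst θ A = Atom.subst θ C.head

open Classical in
/-- The clauses of `P` applicable to `A`, in program order. -/
noncomputable def applicables (P : Prog F Pr) (A : Atom F Pr) : Prog F Pr :=
  P.filter (fun C0 => decide (Applicable A C0))

/-- Variables occurring in the labels, mgu's and clause variants along the path
from the root to `p` (inclusive). -/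
def pathVarsAux (label : List ℕ → Query F Pr) (esub : List ℕ → Subst F)
    (ecls : List ℕ → Option (Clause F Pr)) (p : List ℕ) : Set ℕ :=
  {n | ∃ q : List ℕ, q <+: p ∧
        (n ∈ Query.vars (label q) ∨ n ∈ (esub q).varSet ∨
         ∃ C : Clause F Pr, ecls q = some C ∧ n ∈ C.vars)}

/-- The LD-tree for a program `P` and an initial query `Q0`.  Nodes are coded by
lists of child indices (the root is `[]`); `label` gives the query at a node,
`esub` and `ecls` the mgu and the clause variant of the edge into a node. -/
structure LDTree (F Pr : Type) (P : Prog F Pr) (Q0 : Query F Pr) : Type where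
  dom : Set (List ℕ)
  label : List ℕ → Query F Pr
  esub : List ℕ → Subst F
  ecls : List ℕ → Option (Clause F Pr)
  root_mem : [] ∈ dom
  root_label : label [] = Q0
  root_esub : esub [] = Subst.idS
  root_ecls : ecls [] = none
  prefix_closed : ∀ p q : List ℕ, p <+: q → q ∈ dom → p ∈ dom
  sibling_closed : ∀ (p : List ℕ) (k k' : ℕ), k' ≤ k → p ++ [k] ∈ dom → p ++ [k'] ∈ dom
  empty_leaf : ∀ p ∈ dom, label p = [] → ∀ k : ℕ, p ++ [k] ∉ dom
  cut_step : ∀ p ∈ dom, ∀ rest : Query F Pr, label p = .cut :: rest →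
    (p ++ [0] ∈ dom ∧ label (p ++ [0]) = rest ∧ esub (p ++ [0]) = Subst.idS ∧
     ecls (p ++ [0]) = none ∧ ∀ k : ℕ, k ≠ 0 → p ++ [k] ∉ dom)
  atom_children_mem : ∀ p ∈ dom, ∀ (A : Atom F Pr) (rest : Query F Pr),
    label p = .atm A :: rest →
    ∀ k : ℕ, (p ++ [k] ∈ dom ↔ k < (applicables P A).length)
  atom_step : ∀ p ∈ dom, ∀ (A : Atom F Pr) (rest : Query F Pr),
    label p = .atm A :: rest → ∀ k : ℕ, p ++ [k] ∈ dom →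
      ∃ C C0 : Clause F Pr, (applicables P A)[k]? = some C0 ∧
        ecls (p ++ [k]) = some C ∧ Variant C C0 ∧
        IsMgu (esub (p ++ [k])) A C.head ∧ (esub (p ++ [k])).Idempotent ∧
        Relevant (esub (p ++ [k])) A C.head ∧
        label (p ++ [k]) = Query.subst (esub (p ++ [k])) (C.body ++ rest) ∧
        Disjoint C.vars (pathVarsAux label esub ecls p)

/-- An SLD-tree for `P` and `Q0`, under the selection rule `sel`
(`sel p` is the position of the selected atom of the query at node `p`). -/
structure SLDTree (F Pr : Type) (P : Prog F Pr) (Q0 : Query F Pr) : Type where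
  dom : Set (List ℕ)
  label : List ℕ → Query F Pr
  sel : List ℕ → ℕ
  esub : List ℕ → Subst F
  ecls : List ℕ → Option (Clause F Pr)
  root_mem : [] ∈ dom
  root_label : label [] = Q0
  root_esub : esub [] = Subst.idS
  root_ecls : ecls [] = none
  prefix_closed : ∀ p q : List ℕ, p <+: q → q ∈ dom → p ∈ dom
  sibling_closed : ∀ (p : List ℕ) (k k' : ℕ), k' ≤ k → p ++ [k] ∈ dom → p ++ [k'] ∈ dom
  empty_leaf : ∀ p ∈ dom, label p = [] → ∀ k : ℕ, p ++ [k] ∉ dom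
  sel_lt : ∀ p ∈ dom, label p ≠ [] → sel p < (label p).length
  cut_step : ∀ p ∈ dom, ∀ l r : Query F Pr, label p = l ++ .cut :: r → sel p = l.length →
    (p ++ [0] ∈ dom ∧ label (p ++ [0]) = l ++ r ∧ esub (p ++ [0]) = Subst.idS ∧
     ecls (p ++ [0]) = none ∧ ∀ k : ℕ, k ≠ 0 → p ++ [k] ∉ dom)
  atom_children_mem : ∀ p ∈ dom, ∀ (l : Query F Pr) (A : Atom F Pr) (r : Query F Pr),
    label p = l ++ .atm A :: r → sel p = l.length →
    ∀ k : ℕ, (p ++ [k] ∈ dom ↔ k < (applicables P A).length)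
  atom_step : ∀ p ∈ dom, ∀ (l : Query F Pr) (A : Atom F Pr) (r : Query F Pr),
    label p = l ++ .atm A :: r → sel p = l.length → ∀ k : ℕ, p ++ [k] ∈ dom →
      ∃ C C0 : Clause F Pr, (applicables P A)[k]? = some C0 ∧
        ecls (p ++ [k]) = some C ∧ Variant C C0 ∧
        IsMgu (esub (p ++ [k])) A C.head ∧ (esub (p ++ [k])).Idempotent ∧
        Relevant (esub (p ++ [k])) A C.head ∧
        label (p ++ [k]) = Query.subst (esub (p ++ [k])) (l ++ C.body ++ r) ∧
        Disjoint C.vars (pathVarsAux label esub ecls p)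

/-- `P` is semi-complete w.r.t. `S`: complete for every query possessing a finite SLD-tree. -/
def SemiComplete (P : Prog F Pr) (S : Set (Atom F Pr)) : Prop :=
  ∀ Q : Query F Pr, (∃ T : SLDTree F Pr P Q, T.dom.Finite) → CompleteFor P S Q

/-! ### The preorder sequence `seq(T)` and pruning -/

/-- The subtree of `S` rooted at `q` is finite. -/
def SubtreeFin (S : Set (List ℕ)) (q : List ℕ) : Prop := {x ∈ S | q <+: x}.Finite

/-- Node `p` occurs in the preorder sequence `seq` of the subgraph `S`:
all subtrees to the left of the path to `p` are finite. -/
def InSeq (S : Set (List ℕ)) (p : List ℕ) : Prop :=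
  p ∈ S ∧ ∀ (q : List ℕ) (k k' : ℕ), (q ++ [k]) <+: p → k' < k → SubtreeFin S (q ++ [k'])

/-- `p` strictly precedes `q` in the preorder ordering of tree nodes. -/
def PreLt (p q : List ℕ) : Prop :=
  (p <+: q ∧ p ≠ q) ∨
  ∃ (r : List ℕ) (a b : ℕ), a < b ∧ (r ++ [a]) <+: p ∧ (r ++ [b]) <+: q

variable {P : Prog F Pr} {Q0 : Query F Pr}

/-- An executing node: a node whose query starts with the cut. -/
def LDTree.ExecNode (T : LDTree F Pr P Q0) (e : List ℕ) : Prop :=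
  ∃ rest : Query F Pr, T.label e = .cut :: rest

/-- `s` is the first node `Q_j` of the cutting sequence of the executing node `e`:
the protected suffix of length `|label e|` persists from `s` to `e`,
and `s` is the shallowest such node. -/
def LDTree.CutStart (T : LDTree F Pr P Q0) (e s : List ℕ) : Prop :=
  s <+: e ∧
  (∀ q : List ℕ, s <+: q → q <+: e → q ≠ e → (T.label e).length < (T.label q).length) ∧
  (s = [] ∨ ∃ (p : List ℕ) (k : ℕ), s = p ++ [k] ∧
      ¬ ((T.label e).length < (T.label p).length))

/-- The introducing node of a cutting sequence starting at `s`
(for a cut of the initial query it is the root itself). -/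
def cutIntro (s : List ℕ) : List ℕ := if s = [] then [] else s.dropLast

/-- `x` is pruned by (the cutting sequence of) the executing node `e`:
`x` lies in a subtree rooted at a child, to the right of the cutting sequence,
of a node of the cutting sequence. -/
def LDTree.PrunedByExec (T : LDTree F Pr P Q0) (e x : List ℕ) : Prop :=
  T.ExecNode e ∧ ∃ s : List ℕ, T.CutStart e s ∧
    ∃ (q : List ℕ) (k k' : ℕ), cutIntro s <+: q ∧ (q ++ [k]) <+: e ∧ k < k' ∧
      (q ++ [k']) <+: x

/-- `e` is the (n+1)-st executing node in the preorder sequence of the subgraph `S`. -/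
def LDTree.IsNthExec (T : LDTree F Pr P Q0) (S : Set (List ℕ)) (n : ℕ) (e : List ℕ) : Prop :=
  e ∈ S ∧ T.ExecNode e ∧ InSeq S e ∧
  {e' : List ℕ | e' ∈ S ∧ T.ExecNode e' ∧ InSeq S e' ∧ PreLt e' e}.Finite ∧
  {e' : List ℕ | e' ∈ S ∧ T.ExecNode e' ∧ InSeq S e' ∧ PreLt e' e}.ncard = n

/-- The sequence of trees `T_0, T_1, …` of the definition of the pruned LD-tree. -/
def LDTree.stage (T : LDTree F Pr P Q0) : ℕ → Set (List ℕ)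
  | 0 => T.dom
  | n+1 => T.stage n \
      {x : List ℕ | ∃ e : List ℕ, T.IsNthExec (T.stage n) n e ∧ T.PrunedByExec e x}

/-- The pruned LD-tree `pruned(T)`: the nodes surviving all stages
and occurring in the preorder sequence of the resulting subgraph. -/
def LDTree.prunedDom (T : LDTree F Pr P Q0) : Set (List ℕ) :=
  {p ∈ ⋂ n : ℕ, T.stage n | InSeq (⋂ n : ℕ, T.stage n) p}

/-- Composition of the mgu's along a path (auxiliary, from node `q` down `rest`). -/
def LDTree.branchSubstAux (T : LDTree F Pr P Q0) : List ℕ → List ℕ → Subst F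
  | _, [] => Subst.idS
  | q, k :: rest => Subst.comp (T.esub (q ++ [k])) (T.branchSubstAux (q ++ [k]) rest)

/-- Composition of the mgu's along the branch from the root to `p`. -/
def LDTree.branchSubst (T : LDTree F Pr P Q0) (p : List ℕ) : Subst F :=
  T.branchSubstAux [] p

/-- The node `p` occurs in a cutting sequence of the subgraph `S` of `T`
only as its introducing node. -/
def LDTree.OnlyIntro (T : LDTree F Pr P Q0) (S : Set (List ℕ)) (p : List ℕ) : Prop :=
  ∀ e s : List ℕ, e ∈ S → T.ExecNode e → T.CutStart e s →
    (∀ q : List ℕ, cutIntro s <+: q → q <+: e → q ∈ S) →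
    cutIntro s <+: p → p <+: e → (s ≠ [] ∧ p = cutIntro s)

end LP

namespace LP

/-- Condition (3) of the definition of c-coveredness, for the clause
`C = H ← B⃗0, !, B⃗1` and the substitution `ρ`. -/
def Cond3 {F Pr : Type} (S post : Set (Atom F Pr)) (H : Atom F Pr)
    (B0 B1 : Query F Pr) (A : Atom F Pr) (ρ : Subst F) : Prop :=
  ∀ η : Subst F, Subst.dom η = Query.vars (Query.subst ρ B0) →
    Query.Ground (Query.subst η (Query.subst ρ B0)) →
    SpecModels post (Query.subst η (Query.subst ρ B0)) →
    CoveredBy S ⟨Atom.subst η (Atom.subst ρ H), Query.subst η (Query.subst ρ B1)⟩ A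

/-! ### Substitutions and variables -/

/-- Structural induction on terms, with the hypothesis for all arguments of a compound term. -/
theorem Tm.inductArgs {F : Type} {p : Tm F → Prop} (hv : ∀ n, p (.var n))
    (hf : ∀ f ts, (∀ t ∈ ts, p t) → p (.fn f ts)) : ∀ t, p t
  | .var n => hv n
  | .fn f ts => hf f ts (fun t _ => Tm.inductArgs hv hf t)

@[simp] theorem Tm.subst_var {F : Type} (θ : Subst F) (n : ℕ) :
    (Tm.var n).subst θ = θ n := by
  rw [Tm.subst]

@[simp] theorem Tm.subst_fn {F : Type} (θ : Subst F) (f : F) (ts : List (Tm F)) :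
    (Tm.fn f ts).subst θ = .fn f (ts.map (Tm.subst θ)) := by
  rw [Tm.subst]
  simp

@[simp] theorem Tm.mem_vars_var {F : Type} (m n : ℕ) :
    m ∈ (Tm.var n : Tm F).vars ↔ m = n := by
  simp [Tm.vars, Tm.varsL]

@[simp] theorem Tm.mem_vars_fn {F : Type} (m : ℕ) (f : F) (ts : List (Tm F)) :
    m ∈ (Tm.fn f ts).vars ↔ ∃ t ∈ ts, m ∈ t.vars := by
  simp [Tm.vars, Tm.varsL]

theorem Tm.subst_eq_iff {F : Type} (θ σ : Subst F) (t : Tm F) :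
    t.subst θ = t.subst σ ↔ ∀ n ∈ t.vars, θ n = σ n := by
  induction t using Tm.inductArgs with
  | hv n => simp
  | hf f ts ih =>
    simp only [Tm.subst_fn, Tm.fn.injEq, true_and, List.map_inj_left, Tm.mem_vars_fn]
    constructor
    · rintro h n ⟨t, ht, hn⟩
      exact (ih t ht).1 (h t ht) n hn
    · exact fun h t ht => (ih t ht).2 fun n hn => h n ⟨t, ht, hn⟩

theorem Tm.subst_subst {F : Type} (θ σ : Subst F) (t : Tm F) :
    (t.subst θ).subst σ = t.subst (θ.comp σ) := by
  induction t using Tm.inductArgs with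
  | hv n => simp [Subst.comp]
  | hf f ts ih => simpa using ih

theorem Tm.subst_idS {F : Type} (t : Tm F) : t.subst Subst.idS = t := by
  induction t using Tm.inductArgs with
  | hv n => simp [Subst.idS]
  | hf f ts ih =>
    simp only [Tm.subst_fn, Tm.fn.injEq, true_and]
    exact (List.map_congr_left ih).trans (List.map_id ts)

theorem Tm.mem_vars_subst {F : Type} (θ : Subst F) (t : Tm F) (m : ℕ) :
    m ∈ (t.subst θ).vars ↔ ∃ n ∈ t.vars, m ∈ (θ n).vars := by
  induction t using Tm.inductArgs with
  | hv n => simp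
  | hf f ts ih =>
    simp only [Tm.subst_fn, Tm.mem_vars_fn, List.mem_map]
    constructor
    · rintro ⟨_, ⟨t, ht, rfl⟩, hm⟩
      obtain ⟨n, hn, hm⟩ := (ih t ht).1 hm
      exact ⟨n, ⟨t, ht, hn⟩, hm⟩
    · rintro ⟨n, ⟨t, ht, hn⟩, hm⟩
      exact ⟨_, ⟨t, ht, rfl⟩, (ih t ht).2 ⟨n, hn, hm⟩⟩

theorem Tm.Ground.subst_eq {F : Type} {t : Tm F} (ht : t.Ground) (θ : Subst F) :
    t.subst θ = t := by
  conv_rhs => rw [← Tm.subst_idS t]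
  rw [Tm.subst_eq_iff]
  intro n hn
  rw [ht] at hn
  exact hn.elim

theorem Atom.subst_eq_iff {F Pr : Type} (θ σ : Subst F) (B : Atom F Pr) :
    Atom.subst θ B = Atom.subst σ B ↔ ∀ n ∈ B.vars, θ n = σ n := by
  simp only [Atom.subst, Atom.mk.injEq, true_and, List.map_inj_left, Tm.subst_eq_iff]
  constructor
  · rintro h n ⟨t, ht, hn⟩
    exact h t ht n hn
  · exact fun h t ht n hn => h n ⟨t, ht, hn⟩

theorem Atom.subst_subst {F Pr : Type} (θ σ : Subst F) (B : Atom F Pr) :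
    Atom.subst σ (Atom.subst θ B) = Atom.subst (θ.comp σ) B := by
  simp [Atom.subst, Tm.subst_subst]

theorem Atom.mem_vars_subst {F Pr : Type} (θ : Subst F) (B : Atom F Pr) (m : ℕ) :
    m ∈ (Atom.subst θ B).vars ↔ ∃ n ∈ B.vars, m ∈ (θ n).vars := by
  simp only [Atom.vars, Atom.subst, List.mem_map, Set.mem_ofPred_eq]
  constructor
  · rintro ⟨_, ⟨t, ht, rfl⟩, hm⟩
    obtain ⟨n, hn, hm⟩ := (Tm.mem_vars_subst θ t m).1 hm
    exact ⟨n, ⟨t, ht, hn⟩, hm⟩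
  · rintro ⟨n, ⟨t, ht, hn⟩, hm⟩
    exact ⟨_, ⟨t, ht, rfl⟩, (Tm.mem_vars_subst θ t m).2 ⟨n, hn, hm⟩⟩

theorem EAtom.mem_vars_subst {F Pr : Type} (θ : Subst F) (a : EAtom F Pr) (m : ℕ) :
    m ∈ (EAtom.subst θ a).vars ↔ ∃ n ∈ a.vars, m ∈ (θ n).vars := by
  cases a with
  | cut => simp [EAtom.subst, EAtom.vars]
  | atm B => exact Atom.mem_vars_subst θ B m

theorem Query.subst_congr {F Pr : Type} {θ σ : Subst F} {Q : Query F Pr}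
    (h : ∀ n ∈ Query.vars Q, θ n = σ n) : Query.subst θ Q = Query.subst σ Q := by
  refine List.map_congr_left fun a ha => ?_
  cases a with
  | cut => rfl
  | atm B =>
    exact congrArg EAtom.atm ((Atom.subst_eq_iff θ σ B).2 fun n hn => h n ⟨_, ha, hn⟩)

theorem Query.subst_subst {F Pr : Type} (θ σ : Subst F) (Q : Query F Pr) :
    Query.subst σ (Query.subst θ Q) = Query.subst (θ.comp σ) Q := by
  simp only [Query.subst, List.map_map]
  refine List.map_congr_left fun a _ => ?_
  cases a with
  | cut => rfl
  | atm B => exact congrArg EAtom.atm (Atom.subst_subst θ σ B)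

theorem Query.mem_vars_subst {F Pr : Type} (θ : Subst F) (Q : Query F Pr) (m : ℕ) :
    m ∈ Query.vars (Query.subst θ Q) ↔ ∃ n ∈ Query.vars Q, m ∈ (θ n).vars := by
  simp only [Query.vars, Query.subst, List.mem_map, Set.mem_ofPred_eq]
  constructor
  · rintro ⟨_, ⟨a, ha, rfl⟩, hm⟩
    obtain ⟨n, hn, hm⟩ := (EAtom.mem_vars_subst θ a m).1 hm
    exact ⟨n, ⟨a, ha, hn⟩, hm⟩
  · rintro ⟨n, ⟨a, ha, hn⟩, hm⟩
    exact ⟨_, ⟨a, ha, rfl⟩, (EAtom.mem_vars_subst θ a m).2 ⟨n, hn, hm⟩⟩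

theorem Query.Ground.image {F Pr : Type} {θ : Subst F} {Q : Query F Pr}
    (h : Query.Ground (Query.subst θ Q)) {n : ℕ} (hn : n ∈ Query.vars Q) : (θ n).Ground := by
  refine Set.eq_empty_iff_forall_notMem.2 fun m hm => ?_
  have : m ∈ Query.vars (Query.subst θ Q) := (Query.mem_vars_subst θ Q m).2 ⟨n, hn, hm⟩
  rw [h] at this
  exact this

/-! ### Transport of condition (3) -/

theorem Subst.eq_var_of_notMem {F : Type} {ρ : Subst F} {V : Set ℕ} (hd : Subst.dom ρ ⊆ V)
    {x : ℕ} (hx : x ∉ V) : ρ x = .var x :=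
  not_not.1 fun h => hx (hd h)

/-- With `V` the variables of the head `H` and `W` those of the clause: a clause variable occurring
in `Hρ` already occurs in `H`, so local variables of the clause do not occur in `Hρ`. -/
theorem Subst.mem_of_mem_image {F : Type} {ρ : Subst F} {V W : Set ℕ}
    (hr : Subst.rng ρ ∩ W ⊆ V) {x y : ℕ} (hx : x ∈ V) (hy : y ∈ (ρ x).vars) (hyW : y ∈ W) :
    y ∈ V := by
  by_cases h : ρ x = .var x
  · rw [h, Tm.mem_vars_var] at hy
    exact hy ▸ hx
  · exact hr ⟨⟨x, h, hy⟩, hyW⟩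

/-- **Proposition 1 of the paper.**  If condition (3) of c-coveredness holds for an
atom `Hρ ∈ pre` (with `dom ρ ⊆ vars H`, `rng ρ ∩ vars C ⊆ vars H`,
`dom ρ ∩ rng ρ = ∅`), then it holds for every instance `Hρ'` of `Hρ` such that `A`
is an instance of `Hρ'` and `ρ'` satisfies the same three requirements. -/
theorem cond3_instances {F Pr : Type} (S pre post : Set (Atom F Pr))
    (hpre : SubstClosed pre) (hpost : SubstClosed post)
    (hSg : ∀ B ∈ S, B.Ground)
    (H : Atom F Pr) (B0 B1 : Query F Pr) (A : Atom F Pr) (hA : A.Ground)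
    (ρ : Subst F)
    (hρpre : Atom.subst ρ H ∈ pre)
    (hd : Subst.dom ρ ⊆ H.vars)
    (hr : (Subst.rng ρ ∩ Clause.vars ⟨H, B0 ++ .cut :: B1⟩) ⊆ H.vars)
    (hdr : Disjoint (Subst.dom ρ) (Subst.rng ρ))
    (h3 : Cond3 S post H B0 B1 A ρ)
    (ρ' : Subst F)
    (hinst : Atom.Inst (Atom.subst ρ' H) (Atom.subst ρ H))
    (hAinst : Atom.Inst A (Atom.subst ρ' H))
    (hd' : Subst.dom ρ' ⊆ H.vars)
    (hr' : (Subst.rng ρ' ∩ Clause.vars ⟨H, B0 ++ .cut :: B1⟩) ⊆ H.vars)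
    (hdr' : Disjoint (Subst.dom ρ') (Subst.rng ρ')) :
    Cond3 S post H B0 B1 A ρ' := by
  classical
  obtain ⟨σ, hσ⟩ := hinst
  obtain ⟨δ, hδ⟩ := hAinst
  intro η' hdom' hgr' hpost'
  set W := Clause.vars (⟨H, B0 ++ .cut :: B1⟩ : Clause F Pr) with hW
  have hB0W : ∀ x ∈ Query.vars B0, x ∈ W := by
    rintro x ⟨a, ha, hx⟩
    exact Or.inr ⟨a, by simp [ha], hx⟩
  have hB1W : ∀ x ∈ Query.vars B1, x ∈ W := by
    rintro x ⟨a, ha, hx⟩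
    exact Or.inr ⟨a, by simp [ha], hx⟩
  have hρ' : ∀ x ∈ H.vars, ρ' x = (ρ x).subst σ := by
    rw [Atom.subst_subst, Atom.subst_eq_iff] at hσ
    exact hσ
  -- `η` is `η'` on local variables and `σ` followed by `η'` on the others.
  let η : Subst F := fun y =>
    if y ∈ Query.vars (Query.subst ρ B0) then
      if y ∈ W ∧ y ∉ H.vars then η' y else (σ y).subst η'
    else .var y
  have hηloc : ∀ y ∈ Query.vars (Query.subst ρ B0), y ∈ W → y ∉ H.vars → η y = η' y :=
    fun y h1 h2 h3 => by simp [η, h1, h2, h3]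
  have hηH : ∀ y ∈ Query.vars (Query.subst ρ B0), ∀ x ∈ H.vars, y ∈ (ρ x).vars →
      η y = (σ y).subst η' := by
    intro y h1 x hx hy
    have h2 : ¬(y ∈ W ∧ y ∉ H.vars) := fun h => h.2 (Subst.mem_of_mem_image hr hx hy h.1)
    simp only [η, if_pos h1, if_neg h2]
  have hηout : ∀ y, y ∉ Query.vars (Query.subst ρ B0) → η y = .var y :=
    fun y h => by simp [η, h]
  have hB0eq : Query.subst η (Query.subst ρ B0) = Query.subst η' (Query.subst ρ' B0) := by
    rw [Query.subst_subst, Query.subst_subst]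
    refine Query.subst_congr fun x hx => ?_
    simp only [Subst.comp]
    by_cases hxH : x ∈ H.vars
    · rw [hρ' x hxH, Tm.subst_subst, Tm.subst_eq_iff]
      exact fun y hy => hηH y ((Query.mem_vars_subst ρ B0 y).2 ⟨x, hx, hy⟩) x hxH hy
    · have e := Subst.eq_var_of_notMem hd hxH
      rw [e, Subst.eq_var_of_notMem hd' hxH, Tm.subst_var, Tm.subst_var]
      exact hηloc x ((Query.mem_vars_subst ρ B0 x).2 ⟨x, hx, by simp [e]⟩) (hB0W x hx) hxH
  have hgr : Query.Ground (Query.subst η (Query.subst ρ B0)) := hB0eq ▸ hgr'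
  have hdom : Subst.dom η = Query.vars (Query.subst ρ B0) := by
    ext y
    refine ⟨fun h => not_not.1 fun h' => h (hηout y h'), fun h h' => ?_⟩
    have hg := hgr.image h
    rw [h'] at hg
    have : y ∈ (Tm.var y : Tm F).vars := by simp
    rw [hg] at this
    exact this
  obtain ⟨θ, hθgr, hθA, hθS⟩ := h3 η hdom hgr (hB0eq ▸ hpost')
  -- Both `ηθ` and `σδ` send `Hρ` to `A`.
  have hag : ∀ x ∈ H.vars, ∀ y ∈ (ρ x).vars, (η y).subst θ = (σ y).subst δ := by
    have h := hθA.trans (hδ.trans (congrArg _ hσ))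
    simp only [Atom.subst_subst] at h
    rw [Atom.subst_eq_iff] at h
    intro x hx
    have hx := h x hx
    simp only [Subst.comp] at hx
    rw [Tm.subst_subst, Tm.subst_subst, Tm.subst_eq_iff] at hx
    exact hx
  have hηδ : ∀ x ∈ H.vars, ∀ z ∈ (ρ' x).vars, z ∈ Query.vars (Query.subst ρ' B0) →
      η' z = δ z := by
    intro x hx z hz hzB
    obtain ⟨w, hw, hzw⟩ := (Query.mem_vars_subst ρ' B0 z).1 hzB
    have hwH : w ∈ H.vars := by
      by_contra hwH
      rw [Subst.eq_var_of_notMem hd' hwH, Tm.mem_vars_var] at hzw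
      subst hzw
      exact hwH (Subst.mem_of_mem_image hr' hx hz (hB0W z hw))
    rw [hρ' w hwH, Tm.mem_vars_subst] at hzw
    obtain ⟨y, hy, hzy⟩ := hzw
    have hyB := (Query.mem_vars_subst ρ B0 y).2 ⟨w, hw, hy⟩
    have h := hag w hwH y hy
    rw [(hgr.image hyB).subst_eq, hηH y hyB w hwH hy, Tm.subst_eq_iff] at h
    exact h z hzy
  let θ' : Subst F := fun z => if z ∈ W ∧ z ∉ H.vars then θ z else δ z
  have key : ∀ x, x ∈ H.vars ∨ x ∈ Query.vars B1 →
      ((ρ' x).subst η').subst θ' = ((ρ x).subst η).subst θ := by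
    intro x hx
    by_cases hxH : x ∈ H.vars
    · have h1 : ((ρ x).subst η).subst θ = (ρ' x).subst δ := by
        rw [hρ' x hxH, Tm.subst_subst, Tm.subst_subst, Tm.subst_eq_iff]
        exact hag x hxH
      rw [h1, Tm.subst_subst, Tm.subst_eq_iff]
      intro z hz
      simp only [Subst.comp]
      by_cases hzB : z ∈ Query.vars (Query.subst ρ' B0)
      · rw [(hgr'.image hzB).subst_eq, hηδ x hxH z hz hzB]
      · have h2 : η' z = .var z := Subst.eq_var_of_notMem hdom'.le hzB
        have h3 : ¬(z ∈ W ∧ z ∉ H.vars) :=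
          fun h => h.2 (Subst.mem_of_mem_image hr' hxH hz h.1)
        simp only [h2, Tm.subst_var, θ', if_neg h3]
    · have hxW : x ∈ W := hB1W x (hx.resolve_left hxH)
      -- A local variable occurs in `B0ρ` exactly when it occurs in `B0`.
      have hloc : ∀ τ : Subst F, Subst.dom τ ⊆ H.vars → Subst.rng τ ∩ W ⊆ H.vars →
          (x ∈ Query.vars (Query.subst τ B0) ↔ x ∈ Query.vars B0) := by
        intro τ hτd hτr
        rw [Query.mem_vars_subst]
        constructor
        · rintro ⟨w, hw, hxw⟩
          by_cases hwH : w ∈ H.vars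
          · exact (hxH (Subst.mem_of_mem_image hτr hwH hxw hxW)).elim
          · rw [Subst.eq_var_of_notMem hτd hwH, Tm.mem_vars_var] at hxw
            exact hxw ▸ hw
        · exact fun h => ⟨x, h, by simp [Subst.eq_var_of_notMem hτd hxH]⟩
      rw [Subst.eq_var_of_notMem hd hxH, Subst.eq_var_of_notMem hd' hxH, Tm.subst_var,
        Tm.subst_var]
      by_cases hxB : x ∈ Query.vars B0
      · have h1 := (hloc ρ hd hr).2 hxB
        have h2 := hgr'.image ((hloc ρ' hd' hr').2 hxB)
        rw [hηloc x h1 hxW hxH, h2.subst_eq, h2.subst_eq]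
      · have h1 := hηout x fun h => hxB ((hloc ρ hd hr).1 h)
        have h2 : η' x = .var x :=
          Subst.eq_var_of_notMem hdom'.le fun h => hxB ((hloc ρ' hd' hr').1 h)
        simp [h1, h2, θ', hxW, hxH]
  have hHeq : Atom.subst θ' (Atom.subst η' (Atom.subst ρ' H)) =
      Atom.subst θ (Atom.subst η (Atom.subst ρ H)) := by
    simp only [Atom.subst_subst]
    rw [Atom.subst_eq_iff]
    intro x hx
    simpa only [Subst.comp, Tm.subst_subst] using key x (Or.inl hx)
  have hB1eq : Query.subst θ' (Query.subst η' (Query.subst ρ' B1)) =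
      Query.subst θ (Query.subst η (Query.subst ρ B1)) := by
    simp only [Query.subst_subst]
    refine Query.subst_congr fun x hx => ?_
    simpa only [Subst.comp, Tm.subst_subst] using key x (Or.inr hx)
  refine ⟨θ', ?_, hHeq.trans hθA, ?_⟩
  · simp only [Clause.subst] at hθgr ⊢
    rw [hHeq, hB1eq]
    exact hθgr
  · simp only at hθS ⊢
    rw [hB1eq]
    exact hθS

end LP
end

section
/- Let T be an LD-tree and D = Q_{j−1},…,Q_m a cutting sequence of T. If a node Q of T is pruned by D, then Q does not precede in seq(T) any of the nodes of D; more precisely, if Q and the nodes of D all occur in seq(T), then each node of D precedes Q in seq(T). -/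
namespace LP

/-- The preorder of tree nodes is contained in the lexicographic order of their index lists. -/
theorem PreLt.lt {p q : List ℕ} (h : PreLt p q) : p < q := by
  rcases h with ⟨⟨t, rfl⟩, hne⟩ | ⟨r, a, b, hab, ⟨u, rfl⟩, ⟨v, rfl⟩⟩
  · cases t with
    | nil => simp at hne
    | cons c t =>
      have := List.append_left_lt (l₁ := p) (List.nil_lt_cons c t)
      simpa using this
  · have h : a :: u < b :: v := List.cons_lt_cons_iff.2 (Or.inl hab)
    simpa using List.append_left_lt (l₁ := r) h

/-- If `x` branches off to the right of the path to `e` at the node `r`, then every node on the path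
to `e` precedes `x`. -/
theorem preLt_of_branch {r q e x : List ℕ} {k k' : ℕ} (he : (r ++ [k]) <+: e) (hk : k < k')
    (hx : (r ++ [k']) <+: x) (hq : q <+: e) : PreLt q x := by
  rcases Nat.lt_or_ge r.length q.length with hlt | hge
  · exact Or.inr ⟨r, k, k', hk, List.prefix_of_prefix_length_le he hq (by simpa using hlt), hx⟩
  · have hqr : q <+: r :=
      List.prefix_of_prefix_length_le hq ((List.prefix_append r [k]).trans he) hge
    refine Or.inl ⟨hqr.trans ((List.prefix_append r [k']).trans hx), ?_⟩
    rintro rfl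
    have := hx.length_le
    simp at this
    omega

/-- **Pruned nodes come after the cutting sequence in `seq(T)`.**  Let `e` be an
executing node of the LD-tree `T`, with cutting sequence starting (after its
introducing node `cutIntro s`) at `s`, and let `x` be a node pruned by this cutting
sequence.  If `x` and all the nodes of the cutting sequence occur in `seq(T)`, then
`x` precedes none of the nodes of the cutting sequence; each of them precedes `x`. -/
theorem pruned_after_cutting_sequence {F Pr : Type} (P : Prog F Pr) (Q0 : Query F Pr)
    (T : LDTree F Pr P Q0)
    (e s : List ℕ) (he : e ∈ T.dom) (hex : T.ExecNode e) (hcs : T.CutStart e s)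
    (x : List ℕ) (hx : x ∈ T.dom)
    (hpr : ∃ (q : List ℕ) (k k' : ℕ),
        cutIntro s <+: q ∧ (q ++ [k]) <+: e ∧ k < k' ∧ (q ++ [k']) <+: x)
    (hseqx : InSeq T.dom x)
    (hseqD : ∀ q : List ℕ, cutIntro s <+: q → q <+: e → InSeq T.dom q) :
    ∀ q : List ℕ, cutIntro s <+: q → q <+: e → (¬ PreLt x q) ∧ PreLt q x := by
  obtain ⟨r, k, k', -, hke, hk, hkx⟩ := hpr
  intro q _ hqe
  have h := preLt_of_branch hke hk hkx hqe
  exact ⟨fun h' => lt_asymm h.lt h'.lt, h⟩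

end LP
end
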